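/- Let P be a smooth function on ℝ² with ∂_{x₁}P exponentially decaying, LP = −∫_{x₁}^{∞} ΛQ dx₁' (so (LP)_{x₁} = ΛQ), and suitable decay as x₁ → +∞. Then (P, Q) = (1/4) ∫_ℝ ( ∫_ℝ ΛQ dx₁ )² dx₂, where L = −Δ + 1 − 3Q² and ΛQ = Q + x₁∂_{x₁}Q + x₂∂_{x₂}Q. In particular (P,Q) > 0. -/

import Mathlib

/-!
Since `ΛQ` generates the scaling of the equation `-ΔQ + Q = Q³`, one has `L(ΛQ) = -2Q`
(`lin_lam`). With `F = LP = -∫_{x₁}^∞ ΛQ`, symmetry of `L` gives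

  `-2 (P, Q) = (P, L ΛQ) = (LP, ΛQ) = ∫ F · ΛQ`,

and on each horizontal line `F · ΛQ` is the derivative of `F² / 2` (`integral_tail_mul`), so that
Fubini yields `∫ F · ΛQ = -½ ∫ (∫ ΛQ dx₁)² dx₂`.

The delicate point is the symmetry of `L`, because `∂₂P` is not assumed to be bounded. However
`P`, `Q` and `F` are bounded, so the equation `LP = F` bounds `ΔP`; Green's identity (`green`)
then follows by truncating `ΛQ` with a dilated bump function, moving both derivatives at once, and
passing to the limit by dominated convergence.

For positivity, if `∫ (∫ ΛQ dx₁)² dx₂ = 0` then `∫ ΛQ dx₁ = 0` for almost every `x₂`, hence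
`∫ ΛQ = 0`; but `∫ ΛQ = -∫ Q < 0` (`integral_lam`).
-/

open MeasureTheory

/-- First partial derivative in the `x₁` direction. -/
noncomputable def dx1 (f : ℝ × ℝ → ℝ) (p : ℝ × ℝ) : ℝ := fderiv ℝ f p (1, 0)

/-- First partial derivative in the `x₂` direction. -/
noncomputable def dx2 (f : ℝ × ℝ → ℝ) (p : ℝ × ℝ) : ℝ := fderiv ℝ f p (0, 1)

/-- The Euclidean norm on `ℝ × ℝ`. -/
noncomputable def enorm2 (p : ℝ × ℝ) : ℝ := Real.sqrt (p.1 ^ 2 + p.2 ^ 2)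

/-- The scaling generator `Λf = f + x₁∂_{x₁}f + x₂∂_{x₂}f`. -/
noncomputable def LamOp (f : ℝ × ℝ → ℝ) (p : ℝ × ℝ) : ℝ :=
  f p + p.1 * dx1 f p + p.2 * dx2 f p

open Filter Topology

/-! ### Directional derivatives and the scaling generator -/

/-- Directional derivative of `f` in the constant direction `v`. -/
noncomputable def dv (v : ℝ × ℝ) (f : ℝ × ℝ → ℝ) (p : ℝ × ℝ) : ℝ := fderiv ℝ f p v

/-- `f` is a `C^∞` function on the plane. -/
abbrev Smooth (f : ℝ × ℝ → ℝ) : Prop := ContDiff ℝ (⊤ : ℕ∞) f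

/-- All derivatives of `f` are `O(exp (-|p|))`; this class is stable under `dv v`. -/
def FastDecay (f : ℝ × ℝ → ℝ) : Prop :=
  ∀ n : ℕ, ∃ C : ℝ, ∀ p : ℝ × ℝ, ‖iteratedFDeriv ℝ n f p‖ ≤ C * Real.exp (-enorm2 p)

/-- The one-dimensional integrable weight `(1 + t²)⁻¹`. -/
noncomputable def wt (t : ℝ) : ℝ := (1 + t ^ 2)⁻¹

/-- `f` is dominated by the product weight `wt x₁ * wt x₂`; if `f` is also continuous, it is
integrable on the plane and on horizontal lines. -/
def Dom (f : ℝ × ℝ → ℝ) : Prop := ∃ C : ℝ, ∀ p : ℝ × ℝ, |f p| ≤ C * (wt p.1 * wt p.2)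

lemma smooth_dv {f : ℝ × ℝ → ℝ} (hf : Smooth f) (v : ℝ × ℝ) : Smooth (dv v f) :=
  (hf.fderiv_right (m := (⊤ : ℕ∞)) (by simp)).clm_apply contDiff_const

lemma smooth_fderiv {f : ℝ × ℝ → ℝ} (hf : Smooth f) : ContDiff ℝ (⊤ : ℕ∞) (fderiv ℝ f) :=
  hf.fderiv_right (m := (⊤ : ℕ∞)) (by simp)

lemma smooth_diff {f : ℝ × ℝ → ℝ} (hf : Smooth f) : Differentiable ℝ f :=
  hf.differentiable (by simp)

lemma smooth_lam {f : ℝ × ℝ → ℝ} (hf : Smooth f) : Smooth (LamOp f) :=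
  (hf.add (contDiff_fst.mul (smooth_dv hf (1, 0)))).add (contDiff_snd.mul (smooth_dv hf (0, 1)))

lemma lam_eq (f : ℝ × ℝ → ℝ) : LamOp f = fun p => f p + fderiv ℝ f p p := by
  funext p
  have h : p = p.1 • ((1 : ℝ), (0 : ℝ)) + p.2 • ((0 : ℝ), (1 : ℝ)) := by ext <;> simp
  conv_rhs => rw [show fderiv ℝ f p p
    = fderiv ℝ f p (p.1 • ((1 : ℝ), (0 : ℝ)) + p.2 • ((0 : ℝ), (1 : ℝ))) by rw [← h]]
  rw [map_add, map_smul, map_smul]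
  simp only [LamOp, dx1, dx2, smul_eq_mul]
  ring

/-- The commutator identity `[∂_v, Λ] = ∂_v`. -/
lemma dv_lam {f : ℝ × ℝ → ℝ} (hf : Smooth f) (v : ℝ × ℝ) :
    dv v (LamOp f) = fun p => LamOp (dv v f) p + dv v f p := by
  funext p
  have hd := (smooth_diff hf p).hasFDerivAt
  have hdd := ((smooth_fderiv hf).differentiable (by simp) p).hasFDerivAt
  have h1 := (hd.add (hdd.clm_apply (hasFDerivAt_id p))).fderiv
  have h2 := (hdd.clm_apply (hasFDerivAt_const v p)).fderiv
  have hs : IsSymmSndFDerivAt ℝ f p :=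
    hf.contDiffAt.isSymmSndFDerivAt (by
      rw [minSmoothness_of_isRCLikeNormedField]
      exact WithTop.coe_le_coe.2 (le_top (a := (2 : ℕ∞))))
  have h3 := hs v p
  have e1 : dv v (LamOp f) p = fderiv ℝ f p v
      + (fderiv ℝ f p v + fderiv ℝ (fderiv ℝ f) p v p) := by
    rw [lam_eq, dv]
    erw [h1]
    simp
  have e2 : fderiv ℝ (dv v f) p p = fderiv ℝ (fderiv ℝ f) p p v := by
    unfold dv
    rw [h2]; simp
  rw [e1, lam_eq (dv v f)]
  simp only [e2]
  rw [h3, dv]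
  ring

lemma dv_dv_lam {f : ℝ × ℝ → ℝ} (hf : Smooth f) (v : ℝ × ℝ) :
    dv v (dv v (LamOp f)) = fun p => LamOp (dv v (dv v f)) p + 2 * dv v (dv v f) p := by
  rw [dv_lam hf]
  funext p
  have := fderiv_add (smooth_diff (smooth_lam (smooth_dv hf v)) p)
    (smooth_diff (smooth_dv hf v) p)
  have h2 := congrFun (dv_lam (smooth_dv hf v) v) p
  unfold dv at *
  erw [this]
  simp only [add_apply]
  rw [h2]; ring

lemma fastDecay_dv {f : ℝ × ℝ → ℝ} (hf : Smooth f) (h : FastDecay f) (v : ℝ × ℝ) :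
    FastDecay (dv v f) := by
  intro n
  obtain ⟨C, hC⟩ := h (n + 1)
  refine ⟨‖v‖ * C, fun p => ?_⟩
  refine (norm_iteratedFDeriv_clm_apply_const (smooth_fderiv hf).contDiffAt
    (by exact_mod_cast le_top)).trans ?_
  rw [norm_iteratedFDeriv_fderiv, mul_assoc]
  exact mul_le_mul_of_nonneg_left (hC p) (norm_nonneg _)

/-! ### Decay and integrability -/

lemma wt_pos (t : ℝ) : 0 < wt t := by unfold wt; positivity

lemma wt_le_one (t : ℝ) : wt t ≤ 1 := by
  unfold wt; exact inv_le_one_of_one_le₀ (by nlinarith [sq_nonneg t])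

lemma wt_integrable : Integrable wt := integrable_inv_one_add_sq

/-- Exponential decay beats the rational weights: with `r = |p|`, the product
`(1 + 2r)(1 + x₁²)(1 + x₂²)` is at most `2(1 + r)⁵ ≤ 2 · 5! · e^(1 + r)`. -/
lemma exp_le_wt : ∃ K : ℝ, 0 < K ∧ ∀ p : ℝ × ℝ,
    (1 + 2 * enorm2 p) * Real.exp (-enorm2 p) ≤ K * (wt p.1 * wt p.2) := by
  refine ⟨240 * Real.exp 1, by positivity, fun p => ?_⟩
  set r := enorm2 p with hr
  have hr0 : 0 ≤ r := Real.sqrt_nonneg _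
  have hr2 : r ^ 2 = p.1 ^ 2 + p.2 ^ 2 := Real.sq_sqrt (by positivity)
  have h := Real.pow_div_factorial_le_exp (1 + r) (by positivity) 5
  rw [Real.exp_add, show ((Nat.factorial 5 : ℕ) : ℝ) = 120 by norm_num [Nat.factorial],
    div_le_iff₀ (by norm_num)] at h
  have ha : 1 + p.1 ^ 2 ≤ (1 + r) ^ 2 := by nlinarith [sq_nonneg p.2]
  have hb : 1 + p.2 ^ 2 ≤ (1 + r) ^ 2 := by nlinarith [sq_nonneg p.1]
  have hab : (1 + p.1 ^ 2) * (1 + p.2 ^ 2) ≤ (1 + r) ^ 2 * (1 + r) ^ 2 :=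
    mul_le_mul ha hb (by positivity) (by positivity)
  have h3 : (1 + 2 * r) * ((1 + p.1 ^ 2) * (1 + p.2 ^ 2))
      ≤ (2 * (1 + r)) * ((1 + r) ^ 2 * (1 + r) ^ 2) :=
    mul_le_mul (by linarith) hab (by positivity) (by positivity)
  unfold wt
  rw [Real.exp_neg, ← mul_inv, ← div_eq_mul_inv, ← div_eq_mul_inv,
    div_le_div_iff₀ (Real.exp_pos _) (by positivity)]
  nlinarith

lemma fastDecay_zero {f : ℝ × ℝ → ℝ} (h : FastDecay f) :
    ∃ C : ℝ, 0 ≤ C ∧ ∀ p, |f p| ≤ C * Real.exp (-enorm2 p) := by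
  obtain ⟨C, hC⟩ := h 0
  refine ⟨|C|, abs_nonneg _, fun p => ?_⟩
  have := hC p
  rw [norm_iteratedFDeriv_zero, Real.norm_eq_abs] at this
  exact this.trans (mul_le_mul_of_nonneg_right (le_abs_self _) (Real.exp_pos _).le)

lemma abs_fst_le (p : ℝ × ℝ) : |p.1| ≤ enorm2 p :=
  Real.abs_le_sqrt (by nlinarith [sq_nonneg p.2])

lemma abs_snd_le (p : ℝ × ℝ) : |p.2| ≤ enorm2 p :=
  Real.abs_le_sqrt (by nlinarith [sq_nonneg p.1])

lemma dom_of_poly {f : ℝ × ℝ → ℝ} {C : ℝ} (hC : 0 ≤ C)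
    (h : ∀ p, |f p| ≤ C * ((1 + 2 * enorm2 p) * Real.exp (-enorm2 p))) : Dom f := by
  obtain ⟨K, hK, hK'⟩ := exp_le_wt
  refine ⟨C * K, fun p => (h p).trans ?_⟩
  rw [mul_assoc]
  exact mul_le_mul_of_nonneg_left (hK' p) hC

lemma dom_of_fast {f : ℝ × ℝ → ℝ} (h : FastDecay f) : Dom f := by
  obtain ⟨C, hC, h⟩ := fastDecay_zero h
  refine dom_of_poly hC fun p => (h p).trans (mul_le_mul_of_nonneg_left ?_ hC)
  have : 0 ≤ enorm2 p := Real.sqrt_nonneg _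
  nlinarith [Real.exp_pos (-enorm2 p)]

lemma dom_mul_of_fast {f c : ℝ × ℝ → ℝ} (h : FastDecay f) (hc : ∀ p, |c p| ≤ enorm2 p) :
    Dom (fun p => c p * f p) := by
  obtain ⟨C, hC, h⟩ := fastDecay_zero h
  refine dom_of_poly hC fun p => ?_
  have h0 : 0 ≤ enorm2 p := Real.sqrt_nonneg _
  rw [abs_mul]
  refine (mul_le_mul (hc p) (h p) (abs_nonneg _) h0).trans ?_
  have := mul_nonneg hC (Real.exp_pos (-enorm2 p)).le
  nlinarith

lemma Dom.add {f g : ℝ × ℝ → ℝ} (hf : Dom f) (hg : Dom g) : Dom (fun p => f p + g p) := by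
  obtain ⟨C, hC⟩ := hf
  obtain ⟨D, hD⟩ := hg
  refine ⟨C + D, fun p => (abs_add_le _ _).trans ?_⟩
  rw [add_mul]
  exact add_le_add (hC p) (hD p)

lemma Dom.bdd_mul {f g : ℝ × ℝ → ℝ} (hf : Dom f) {M : ℝ} (hg : ∀ p, |g p| ≤ M) :
    Dom (fun p => g p * f p) := by
  obtain ⟨C, hC⟩ := hf
  refine ⟨M * C, fun p => ?_⟩
  rw [abs_mul, mul_assoc]
  exact mul_le_mul (hg p) (hC p) (abs_nonneg _) ((abs_nonneg _).trans (hg p))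

lemma dom_lam {f : ℝ × ℝ → ℝ} (hs : Smooth f) (h : FastDecay f) : Dom (LamOp f) :=
  ((dom_of_fast h).add (dom_mul_of_fast (fastDecay_dv hs h (1, 0)) abs_fst_le)).add
    (dom_mul_of_fast (fastDecay_dv hs h (0, 1)) abs_snd_le)

lemma Dom.integrable {f : ℝ × ℝ → ℝ} (hf : Dom f) (hc : Continuous f) : Integrable f := by
  obtain ⟨C, hC⟩ := hf
  have : Integrable (fun p : ℝ × ℝ => C * (wt p.1 * wt p.2)) :=
    (wt_integrable.mul_prod wt_integrable).const_mul C
  exact this.mono' hc.aestronglyMeasurable (ae_of_all _ hC)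

/-- A continuous function dominated by the product weight is integrable on every horizontal line,
with a bound uniform in the line. -/
lemma Dom.line {f : ℝ × ℝ → ℝ} (hf : Dom f) (hc : Continuous f) :
    ∃ M : ℝ, ∀ y, Integrable (fun s => f (s, y)) ∧ ∫ s, |f (s, y)| ≤ M := by
  obtain ⟨C, hC⟩ := hf
  have hC0 : 0 ≤ C := by
    have := (abs_nonneg _).trans (hC 0)
    have h2 := mul_pos (wt_pos (0 : ℝ × ℝ).1) (wt_pos (0 : ℝ × ℝ).2)
    exact nonneg_of_mul_nonneg_left this h2
  have hb : ∀ y s, |f (s, y)| ≤ C * wt s := fun y s => (hC (s, y)).trans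
    (mul_le_mul_of_nonneg_left (mul_le_of_le_one_right (wt_pos s).le (wt_le_one y)) hC0)
  refine ⟨∫ s, C * wt s, fun y => ?_⟩
  have hi : Integrable (fun s => f (s, y)) :=
    (wt_integrable.const_mul C).mono'
      (hc.comp (by fun_prop : Continuous fun s : ℝ => (s, y))).aestronglyMeasurable
      (ae_of_all _ (hb y))
  exact ⟨hi, integral_mono hi.abs (wt_integrable.const_mul C) (hb y)⟩

/-! ### The one-dimensional integration by parts -/

/-- If `G x = ∫_x^∞ g`, then `∫ G g = ½ (∫ g)²`, since `(-G²/2)' = G g`. -/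
lemma integral_tail_mul {g : ℝ → ℝ} (hc : Continuous g) (hi : Integrable g)
    (hGi : Integrable (fun x => (∫ s in Set.Ioi x, g s) * g x)) :
    ∫ x, (∫ s in Set.Ioi x, g s) * g x = (∫ s, g s) ^ 2 / 2 := by
  set G : ℝ → ℝ := fun x => ∫ s in Set.Ioi x, g s with hG
  have hrep : ∀ x, G x = (∫ s, g s) - ∫ s in Set.Iic x, g s := fun x => by
    rw [← intervalIntegral.integral_Iic_add_Ioi (b := x) hi.integrableOn hi.integrableOn]
    simp [hG]
  have hrep2 : G = fun x => G 0 - ∫ s in (0 : ℝ)..x, g s := by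
    funext x
    rw [intervalIntegral.integral_Iic_sub_Iic hi.integrableOn hi.integrableOn |>.symm,
      hrep, hrep 0]
    ring
  have hd : ∀ x, HasDerivAt G (-g x) x := fun x => by
    rw [hrep2]
    exact (hc.integral_hasStrictDerivAt 0 x).hasDerivAt.const_sub _
  have htop : Tendsto G atTop (𝓝 0) := by
    have := (intervalIntegral_tendsto_integral_Ioi 0 hi.integrableOn tendsto_id).const_sub (G 0)
    rw [hrep2]
    simpa [hG] using this
  have hbot : Tendsto G atBot (𝓝 (∫ s, g s)) := by
    have := (intervalIntegral_tendsto_integral_Iic 0 hi.integrableOn tendsto_id).const_add (G 0)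
    rw [hrep2]
    have e : G 0 + ∫ s in Set.Iic 0, g s = ∫ s, g s := by rw [hrep 0]; ring
    rw [e] at this
    refine this.congr fun x => ?_
    rw [intervalIntegral.integral_symm]; simp [sub_eq_add_neg]
  have hd2 : ∀ x, HasDerivAt (fun x => -(G x ^ 2 / 2)) (G x * g x) x := fun x => by
    exact (((hd x).pow 2).div_const 2).neg.congr_deriv (by push_cast; ring)
  have := integral_of_hasDerivAt_of_tendsto hd2 hGi
    (((hbot.pow 2).div_const 2).neg) (((htop.pow 2).div_const 2).neg)
  rw [this]; ring

/-! ### Green's identity by truncation -/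

lemma dv_mul {f g : ℝ × ℝ → ℝ} (hf : Smooth f) (hg : Smooth g) (v : ℝ × ℝ) :
    dv v (fun p => f p * g p) = fun p => f p * dv v g p + g p * dv v f p := by
  funext p
  have := fderiv_fun_mul (smooth_diff hf p) (smooth_diff hg p)
  simp [dv, this]

lemma dv_scale {f : ℝ × ℝ → ℝ} (hf : Smooth f) (v : ℝ × ℝ) (ε : ℝ) :
    dv v (fun p => f (ε • p)) = fun p => ε * dv v f (ε • p) := by
  funext p
  have h1 : HasFDerivAt (fun q : ℝ × ℝ => ε • q) (ε • ContinuousLinearMap.id ℝ (ℝ × ℝ)) p :=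
    (hasFDerivAt_id p).const_smul ε
  have := ((smooth_diff hf (ε • p)).hasFDerivAt.comp p h1).fderiv
  unfold dv
  erw [this]
  simp

lemma dv_add {f g : ℝ × ℝ → ℝ} (hf : Smooth f) (hg : Smooth g) (v : ℝ × ℝ) :
    dv v (fun p => f p + g p) = fun p => dv v f p + dv v g p := by
  funext p
  have := fderiv_fun_add (smooth_diff hf p) (smooth_diff hg p)
  simp [dv, this]

lemma dv_const_mul {f : ℝ × ℝ → ℝ} (hf : Smooth f) (v : ℝ × ℝ) (c : ℝ) :
    dv v (fun p => c * f p) = fun p => c * dv v f p := by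
  funext p
  have := fderiv_const_mul (smooth_diff hf p) c
  simp [dv, this]

lemma smooth_scale {f : ℝ × ℝ → ℝ} (hf : Smooth f) (ε : ℝ) : Smooth (fun p => f (ε • p)) :=
  hf.comp (contDiff_id.const_smul ε)

/-- The second derivative of a dilated cutoff times `g`. -/
lemma dv_dv_cutoff {χ g : ℝ × ℝ → ℝ} (hχ : Smooth χ) (hg : Smooth g) (v : ℝ × ℝ) (ε : ℝ) :
    dv v (dv v (fun p => χ (ε • p) * g p)) = fun p =>
      χ (ε • p) * dv v (dv v g) p + 2 * ε * dv v χ (ε • p) * dv v g p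
        + ε ^ 2 * dv v (dv v χ) (ε • p) * g p := by
  have s1 := smooth_scale hχ ε
  have s2 := smooth_scale (smooth_dv hχ v) ε
  have s3 : Smooth (fun p => ε * dv v χ (ε • p)) := contDiff_const.mul s2
  rw [dv_mul s1 hg, dv_scale hχ, dv_add (s1.mul (smooth_dv hg v)) (hg.mul s3),
    dv_mul s1 (smooth_dv hg v), dv_mul hg s3, dv_const_mul s2, dv_scale hχ,
    dv_scale (smooth_dv hχ v)]
  funext p
  ring

lemma ibp_compact {f g : ℝ × ℝ → ℝ} (hf : Smooth f) (hg : Smooth g) (hgc : HasCompactSupport g)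
    (v : ℝ × ℝ) : ∫ p, f p * dv v g p = -∫ p, dv v f p * g p := by
  have hdc : HasCompactSupport (dv v g) := hgc.fderiv_apply ℝ v
  refine integral_mul_fderiv_eq_neg_fderiv_mul_of_integrable ?_ ?_ ?_
    (fun x _ => smooth_diff hf x) (fun x _ => smooth_diff hg x)
  · exact ((smooth_dv hf v).continuous.mul hg.continuous).integrable_of_hasCompactSupport
      hgc.mul_left
  · exact (hf.continuous.mul (smooth_dv hg v).continuous).integrable_of_hasCompactSupport
      hdc.mul_left
  · exact (hf.continuous.mul hg.continuous).integrable_of_hasCompactSupport hgc.mul_left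

lemma ibp_compact_two {f g : ℝ × ℝ → ℝ} (hf : Smooth f) (hg : Smooth g)
    (hgc : HasCompactSupport g) (v : ℝ × ℝ) :
    ∫ p, f p * dv v (dv v g) p = ∫ p, dv v (dv v f) p * g p := by
  rw [ibp_compact hf (smooth_dv hg v) (hgc.fderiv_apply ℝ v),
    ibp_compact (smooth_dv hf v) hg hgc, neg_neg]

lemma bdd_of_compact {f : ℝ × ℝ → ℝ} (hf : Smooth f) (hc : HasCompactSupport f) :
    ∃ M : ℝ, ∀ p, |f p| ≤ M :=
  hf.continuous.bounded_above_of_compact_support hc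

/-- The dilation parameters `1/(n+1)`; the cutoff `χ (eps n • p)` exhausts the plane. -/
noncomputable def eps (n : ℕ) : ℝ := 1 / ((n : ℝ) + 1)

lemma eps_pos (n : ℕ) : 0 < eps n := by unfold eps; positivity

lemma eps_le (n : ℕ) : eps n ≤ 1 := by
  unfold eps; rw [div_le_one (by positivity)]; linarith [n.cast_nonneg (α := ℝ)]

lemma eps_tendsto : Tendsto eps atTop (𝓝 0) := tendsto_one_div_add_atTop_nhds_zero_nat

/-- Removing the cutoff in `∫ B χ_n g`. -/
lemma tendsto_cutoff {χ B g : ℝ × ℝ → ℝ} (hχ : Smooth χ) (hχc : HasCompactSupport χ)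
    (hχ0 : χ 0 = 1) (hB : Continuous B) {M : ℝ} (hBM : ∀ p, |B p| ≤ M)
    (hg : Continuous g) (hgd : Dom g) :
    Tendsto (fun n => ∫ p, B p * (χ (eps n • p) * g p)) atTop (𝓝 (∫ p, B p * g p)) := by
  obtain ⟨N, hN⟩ := bdd_of_compact hχ hχc
  refine tendsto_integral_of_dominated_convergence (fun p => M * (N * |g p|)) ?_ ?_ ?_ ?_
  · intro n
    have := hχ.continuous
    exact Continuous.aestronglyMeasurable (by fun_prop)
  · exact (((hgd.integrable hg).abs).const_mul N).const_mul M
  · refine fun n => ae_of_all _ fun p => ?_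
    rw [Real.norm_eq_abs, abs_mul, abs_mul]
    have hN0 := (abs_nonneg _).trans (hN p)
    have hM0 := (abs_nonneg _).trans (hBM p)
    gcongr
    exacts [hBM p, hN _]
  · refine ae_of_all _ fun p => ?_
    have h1 : Tendsto (fun n => χ (eps n • p)) atTop (𝓝 1) := by
      have := (hχ.continuous.tendsto _).comp (eps_tendsto.smul_const p)
      simpa [hχ0, Function.comp_def] using this
    simpa using (h1.mul_const (g p)).const_mul (B p)

/-- Removing the cutoff in `∫ B ∂_v²(χ_n g)`: the derivatives falling on `χ_n` carry a factor
`eps n`. -/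
lemma tendsto_dv_dv_cutoff {χ B g : ℝ × ℝ → ℝ} (hχ : Smooth χ) (hχc : HasCompactSupport χ)
    (hχ0 : χ 0 = 1) (hB : Continuous B) {M : ℝ} (hBM : ∀ p, |B p| ≤ M)
    (hg : Smooth g) (v : ℝ × ℝ) (hgd : Dom g) (hgd1 : Dom (dv v g)) (hgd2 : Dom (dv v (dv v g))) :
    Tendsto (fun n => ∫ p, B p * dv v (dv v (fun p => χ (eps n • p) * g p)) p) atTop
      (𝓝 (∫ p, B p * dv v (dv v g) p)) := by
  have c1 := (smooth_dv hχ v)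
  have c2 := (smooth_dv c1 v)
  have g1 := (smooth_dv hg v)
  have g2 := (smooth_dv g1 v)
  obtain ⟨N0, hN0⟩ := bdd_of_compact hχ hχc
  obtain ⟨N1, hN1⟩ := bdd_of_compact c1 (hχc.fderiv_apply ℝ v)
  obtain ⟨N2, hN2⟩ := bdd_of_compact c2 ((hχc.fderiv_apply ℝ v).fderiv_apply ℝ v)
  refine tendsto_integral_of_dominated_convergence
    (fun p => M * (N0 * |dv v (dv v g) p| + 2 * 1 * N1 * |dv v g p| + 1 ^ 2 * N2 * |g p|))
    ?_ ?_ ?_ ?_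
  · intro n
    have := smooth_dv (smooth_dv ((smooth_scale hχ (eps n)).mul hg) v) v
    exact (hB.mul this.continuous).aestronglyMeasurable
  · exact (((((hgd2.integrable g2.continuous).abs).const_mul _).add
      (((hgd1.integrable g1.continuous).abs).const_mul _)).add
      (((hgd.integrable hg.continuous).abs).const_mul _)).const_mul M
  · refine fun n => ae_of_all _ fun p => ?_
    rw [dv_dv_cutoff hχ hg, Real.norm_eq_abs, abs_mul]
    have e0 := (eps_pos n).le
    have e1 := eps_le n
    have hM0 := (abs_nonneg _).trans (hBM p)
    have hN1' := (abs_nonneg _).trans (hN1 p)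
    have hN2' := (abs_nonneg _).trans (hN2 p)
    refine mul_le_mul (hBM p) ?_ (abs_nonneg _) hM0
    refine (abs_add_le _ _).trans (add_le_add ((abs_add_le _ _).trans (add_le_add ?_ ?_)) ?_)
    · rw [abs_mul]
      gcongr
      exact hN0 _
    · rw [abs_mul, abs_mul, abs_mul, abs_of_nonneg e0, abs_two]
      gcongr
      exact hN1 _
    · rw [abs_mul, abs_mul, abs_pow, abs_of_nonneg e0]
      gcongr
      exact hN2 _
  · refine ae_of_all _ fun p => ?_
    simp only [dv_dv_cutoff hχ hg]
    have hc0 := hχ.continuous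
    have hc1 := c1.continuous
    have hc2 := c2.continuous
    have hcont : Continuous (fun e : ℝ => B p * (χ (e • p) * dv v (dv v g) p
        + 2 * e * dv v χ (e • p) * dv v g p + e ^ 2 * dv v (dv v χ) (e • p) * g p)) := by
      fun_prop
    have := (hcont.tendsto 0).comp eps_tendsto
    simpa [hχ0, Function.comp_def] using this

/-- Green's identity `∫ f Δg = ∫ (Δf) g` for `f` bounded with bounded Laplacian and `g` decaying
with its derivatives. No control on `∇f` is needed: both derivatives are moved onto a compactly
supported truncation of `g` before passing to the limit. -/
lemma green {f g : ℝ × ℝ → ℝ} (hf : Smooth f) (hg : Smooth g) {M M' : ℝ} (hfM : ∀ p, |f p| ≤ M)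
    (hfM' : ∀ p, |dv (1, 0) (dv (1, 0) f) p + dv (0, 1) (dv (0, 1) f) p| ≤ M')
    (hgd : Dom g) (hgd1 : ∀ v, Dom (dv v g)) (hgd2 : ∀ v, Dom (dv v (dv v g))) :
    ∫ p, f p * (dv (1, 0) (dv (1, 0) g) p + dv (0, 1) (dv (0, 1) g) p)
      = ∫ p, (dv (1, 0) (dv (1, 0) f) p + dv (0, 1) (dv (0, 1) f) p) * g p := by
  let b : ContDiffBump (0 : ℝ × ℝ) := ⟨1, 2, one_pos, one_lt_two⟩
  have hχ : Smooth b := b.contDiff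
  have hχc : HasCompactSupport b := b.hasCompactSupport
  have hχ0 : b 0 = 1 := b.one_of_mem_closedBall (by simp [b])
  have sd : ∀ {u : ℝ × ℝ → ℝ}, Smooth u → ∀ v, Continuous (dv v (dv v u)) := fun hu v =>
    (smooth_dv (smooth_dv hu v) v).continuous
  have hT : ∀ v, Tendsto (fun n => ∫ p, f p * dv v (dv v (fun p => b (eps n • p) * g p)) p) atTop
      (𝓝 (∫ p, f p * dv v (dv v g) p)) := fun v =>
    tendsto_dv_dv_cutoff hχ hχc hχ0 hf.continuous hfM hg v hgd (hgd1 v) (hgd2 v)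
  have hL := tendsto_cutoff hχ hχc hχ0 ((sd hf (1, 0)).add (sd hf (0, 1))) hfM' hg.continuous hgd
  have hR := (hT (1, 0)).add (hT (0, 1))
  have hi : ∀ v, Integrable (fun p => f p * dv v (dv v g) p) := fun v =>
    ((hgd2 v).bdd_mul hfM).integrable (hf.continuous.mul (sd hg v))
  rw [← integral_add (hi _) (hi _)] at hR
  simp only [mul_add]
  refine tendsto_nhds_unique hR (hL.congr fun n => ?_)
  have hs : Smooth (fun p => b (eps n • p) * g p) := (smooth_scale hχ (eps n)).mul hg
  have hc : HasCompactSupport (fun p => b (eps n • p) * g p) :=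
    (hχc.comp_smul (eps_pos n).ne').mul_right
  rw [ibp_compact_two hf hs hc, ibp_compact_two hf hs hc, ← integral_add]
  · simp only [Pi.add_apply, add_mul]
  · exact ((sd hf _).mul hs.continuous).integrable_of_hasCompactSupport hc.mul_left
  · exact ((sd hf _).mul hs.continuous).integrable_of_hasCompactSupport hc.mul_left

/-! ### Scaling identities for the ground state -/

lemma lam_add {f g : ℝ × ℝ → ℝ} (hf : Smooth f) (hg : Smooth g) (p : ℝ × ℝ) :
    LamOp (fun p => f p + g p) p = LamOp f p + LamOp g p := by
  simp only [lam_eq]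
  rw [fderiv_fun_add (smooth_diff hf p) (smooth_diff hg p), add_apply]
  ring

lemma lam_sub_cube {f : ℝ × ℝ → ℝ} (hf : Smooth f) (p : ℝ × ℝ) :
    LamOp (fun p => f p - f p ^ 3) p = LamOp f p - 3 * f p ^ 2 * LamOp f p + 2 * f p ^ 3 := by
  have h := (smooth_diff hf p).hasFDerivAt
  have h2 := (h.sub (h.pow 3)).fderiv
  simp only [lam_eq]
  erw [h2]
  simp
  ring

/-- The identity `L(ΛQ) = -2Q`, obtained by differentiating the scaling of the equation. -/
lemma lin_lam {Q : ℝ × ℝ → ℝ} (hQ : Smooth Q)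
    (hPDE : ∀ p, -(dv (1, 0) (dv (1, 0) Q) p + dv (0, 1) (dv (0, 1) Q) p) + Q p = Q p ^ 3)
    (p : ℝ × ℝ) :
    -(dv (1, 0) (dv (1, 0) (LamOp Q)) p + dv (0, 1) (dv (0, 1) (LamOp Q)) p) + LamOp Q p
      - 3 * Q p ^ 2 * LamOp Q p = -2 * Q p := by
  have hfun : (fun p => dv (1, 0) (dv (1, 0) Q) p + dv (0, 1) (dv (0, 1) Q) p)
      = fun p => Q p - Q p ^ 3 := by
    funext q; linarith [hPDE q]
  have h := lam_add (smooth_dv (smooth_dv hQ (1, 0)) (1, 0))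
    (smooth_dv (smooth_dv hQ (0, 1)) (0, 1)) p
  rw [hfun, lam_sub_cube hQ] at h
  rw [dv_dv_lam hQ, dv_dv_lam hQ]
  linarith [hPDE p]

/-- `∫ ΛQ = -∫ Q`: the generator is `L²`-critical, and `∫ x_i ∂_i Q = -∫ Q` for `i = 1, 2`. -/
lemma integral_lam {Q : ℝ × ℝ → ℝ} (hQ : Smooth Q) (hfast : FastDecay Q) :
    ∫ p, LamOp Q p = -∫ p, Q p := by
  have hi : Integrable Q := (dom_of_fast hfast).integrable hQ.continuous
  have h1 : Integrable (fun p : ℝ × ℝ => p.1 * dv (1, 0) Q p) :=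
    (dom_mul_of_fast (fastDecay_dv hQ hfast (1, 0)) abs_fst_le).integrable
      (continuous_fst.mul (smooth_dv hQ _).continuous)
  have h2 : Integrable (fun p : ℝ × ℝ => p.2 * dv (0, 1) Q p) :=
    (dom_mul_of_fast (fastDecay_dv hQ hfast (0, 1)) abs_snd_le).integrable
      (continuous_snd.mul (smooth_dv hQ _).continuous)
  have i1 : ∫ p : ℝ × ℝ, p.1 * dv (1, 0) Q p = -∫ p, Q p := by
    have := integral_mul_fderiv_eq_neg_fderiv_mul_of_integrable (μ := (volume : Measure (ℝ × ℝ)))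
      (f := fun p : ℝ × ℝ => p.1) (g := Q) (v := (1, 0)) (by simpa [fderiv_fst] using hi) h1
      ((dom_mul_of_fast hfast abs_fst_le).integrable (continuous_fst.mul hQ.continuous))
      (fun x _ => differentiableAt_fst) (fun x _ => smooth_diff hQ x)
    simpa [dv, fderiv_fst] using this
  have i2 : ∫ p : ℝ × ℝ, p.2 * dv (0, 1) Q p = -∫ p, Q p := by
    have := integral_mul_fderiv_eq_neg_fderiv_mul_of_integrable (μ := (volume : Measure (ℝ × ℝ)))
      (f := fun p : ℝ × ℝ => p.2) (g := Q) (v := (0, 1)) (by simpa [fderiv_snd] using hi) h2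
      ((dom_mul_of_fast hfast abs_snd_le).integrable (continuous_snd.mul hQ.continuous))
      (fun x _ => differentiableAt_snd) (fun x _ => smooth_diff hQ x)
    simpa [dv, fderiv_snd] using this
  have : ∫ p, LamOp Q p
      = ∫ p : ℝ × ℝ, (Q p + p.1 * dv (1, 0) Q p) + p.2 * dv (0, 1) Q p := rfl
  have h12 : Integrable (fun p : ℝ × ℝ => Q p + p.1 * dv (1, 0) Q p) := hi.add h1
  rw [this, integral_add h12 h2, integral_add hi h1, i1, i2]
  ring

/-- Let `Q` be the 2D cubic ground state and `L = −Δ + 1 − 3Q²`. Let `P` be a smooth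
function with `∂_{x₁}P` exponentially decaying, `LP = −∫_{x₁}^∞ ΛQ dx₁'` (so
`(LP)_{x₁} = ΛQ`), bounded, and with `P(x₁,x₂) → 0` as `x₁ → +∞`. Then
`(P, Q) = (1/4) ∫ (∫ ΛQ dx₁)² dx₂`, and in particular `(P, Q) > 0`. -/
theorem stmt16 (Q P : ℝ × ℝ → ℝ)
    (hQsmooth : ContDiff ℝ (⊤ : ℕ∞) Q) (hQpos : ∀ p, 0 < Q p)
    (hradial : ∀ p q : ℝ × ℝ, enorm2 p = enorm2 q → Q p = Q q)
    (hQdecay : ∀ n : ℕ, ∃ C : ℝ, ∀ p : ℝ × ℝ,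
      ‖iteratedFDeriv ℝ n Q p‖ ≤ C * Real.exp (-enorm2 p))
    (hPDE : ∀ p : ℝ × ℝ, -(dx1 (dx1 Q) p + dx2 (dx2 Q) p) + Q p = (Q p) ^ 3)
    (hPsmooth : ContDiff ℝ (⊤ : ℕ∞) P)
    (hPbdd : ∃ C : ℝ, ∀ p : ℝ × ℝ, |P p| ≤ C)
    (hP1decay : ∃ C a : ℝ, 0 < a ∧ ∀ p : ℝ × ℝ,
      |dx1 P p| ≤ C * Real.exp (-(a * (|p.1| + |p.2|))))
    (hPlim : ∀ x₂ : ℝ, Filter.Tendsto (fun x₁ => P (x₁, x₂)) Filter.atTop (nhds 0))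
    (hLP : ∀ p : ℝ × ℝ,
      -(dx1 (dx1 P) p + dx2 (dx2 P) p) + P p - 3 * (Q p) ^ 2 * P p
        = -∫ s in Set.Ioi p.1, LamOp Q (s, p.2)) :
    (∫ p : ℝ × ℝ, P p * Q p)
        = (1 / 4) * ∫ x₂ : ℝ, (∫ x₁ : ℝ, LamOp Q (x₁, x₂)) ^ 2 ∧
      0 < ∫ p : ℝ × ℝ, P p * Q p := by
  have hL : ∀ p, -(dv (1, 0) (dv (1, 0) P) p + dv (0, 1) (dv (0, 1) P) p) + P p
      - 3 * Q p ^ 2 * P p = -∫ s in Set.Ioi p.1, LamOp Q (s, p.2) := hLP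
  have hfast : FastDecay Q := hQdecay
  set g := LamOp Q with hg
  have hgs : Smooth g := smooth_lam hQsmooth
  have hgd : Dom g := dom_lam hQsmooth hfast
  have hgd1 : ∀ v, Dom (dv v g) := fun v => by
    rw [hg, dv_lam hQsmooth]
    exact (dom_lam (smooth_dv hQsmooth v) (fastDecay_dv hQsmooth hfast v)).add
      (dom_of_fast (fastDecay_dv hQsmooth hfast v))
  have hgd2 : ∀ v, Dom (dv v (dv v g)) := fun v => by
    have hs := smooth_dv (smooth_dv hQsmooth v) v
    have hf := fastDecay_dv (smooth_dv hQsmooth v) (fastDecay_dv hQsmooth hfast v) v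
    rw [hg, dv_dv_lam hQsmooth]
    exact (dom_lam hs hf).add ((dom_of_fast hf).bdd_mul (M := 2) (g := fun _ => 2) (by simp))
  set F : ℝ × ℝ → ℝ := fun p => -∫ s in Set.Ioi p.1, g (s, p.2) with hF
  have hPs1 := smooth_dv (smooth_dv hPsmooth (1, 0)) (1, 0)
  have hPs2 := smooth_dv (smooth_dv hPsmooth (0, 1)) (0, 1)
  -- Continuity of `F` is read off from the equation `LP = F`.
  have hFc : Continuous F := by
    have : F = fun p => -(dv (1, 0) (dv (1, 0) P) p + dv (0, 1) (dv (0, 1) P) p) + P p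
        - 3 * Q p ^ 2 * P p := funext fun p => (hL p).symm
    rw [this]
    have a1 := hPs1.continuous
    have a2 := hPs2.continuous
    have a3 := hPsmooth.continuous
    have a4 := hQsmooth.continuous
    fun_prop
  obtain ⟨N, hN⟩ := hgd.line hgs.continuous
  have hFb : ∀ p, |F p| ≤ N := fun p => by
    simp only [hF, abs_neg]
    refine abs_integral_le_integral_abs.trans (le_trans ?_ (hN p.2).2)
    exact setIntegral_le_integral (hN p.2).1.abs (ae_of_all _ fun s => abs_nonneg _)
  obtain ⟨C, hC⟩ := hPbdd
  obtain ⟨K, hK0, hK⟩ := fastDecay_zero hfast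
  have hK' : ∀ p, |Q p| ≤ K := fun p => (hK p).trans
    (mul_le_of_le_one_right hK0 (Real.exp_le_one_iff.2 (neg_nonpos.2 (Real.sqrt_nonneg _))))
  have hV : ∀ p, |P p - 3 * Q p ^ 2 * P p| ≤ C + 3 * K ^ 2 * C := fun p => by
    refine (abs_sub _ _).trans (add_le_add (hC p) ?_)
    rw [abs_mul, abs_mul, abs_pow, abs_of_pos (by norm_num : (0 : ℝ) < 3)]
    have := hK' p
    have := hC p
    gcongr
  have hΔ : ∀ p, |dv (1, 0) (dv (1, 0) P) p + dv (0, 1) (dv (0, 1) P) p|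
      ≤ (C + 3 * K ^ 2 * C) + N := fun p => by
    have : dv (1, 0) (dv (1, 0) P) p + dv (0, 1) (dv (0, 1) P) p
        = (P p - 3 * Q p ^ 2 * P p) - F p := by rw [hF]; linarith [hL p]
    rw [this]
    exact (abs_sub _ _).trans (add_le_add (hV p) (hFb p))
  have hgreen := green hPsmooth hgs hC hΔ hgd hgd1 hgd2
  have hQi : Integrable Q := (dom_of_fast hfast).integrable hQsmooth.continuous
  have hVc : Continuous fun p => P p - 3 * Q p ^ 2 * P p := by
    have a3 := hPsmooth.continuous
    have a4 := hQsmooth.continuous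
    fun_prop
  have hVi : Integrable fun p => (P p - 3 * Q p ^ 2 * P p) * g p :=
    (hgd.bdd_mul hV).integrable (hVc.mul hgs.continuous)
  have hFgd : Dom fun p => F p * g p := hgd.bdd_mul hFb
  have hFgc : Continuous fun p => F p * g p := hFc.mul hgs.continuous
  have hFgi : Integrable fun p => F p * g p := hFgd.integrable hFgc
  have hPQi : Integrable fun p => P p * Q p :=
    ((dom_of_fast hfast).bdd_mul hC).integrable (hPsmooth.continuous.mul hQsmooth.continuous)
  -- Symmetry of `L`: `-2 (P, Q) = (P, L ΛQ) = (LP, ΛQ) = ∫ F g`.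
  have hsym : -2 * ∫ p, P p * Q p = ∫ p, F p * g p := by
    have e1 : ∀ p, P p * (dv (1, 0) (dv (1, 0) g) p + dv (0, 1) (dv (0, 1) g) p)
        = (P p - 3 * Q p ^ 2 * P p) * g p + 2 * (P p * Q p) := fun p => by
      linear_combination (-P p) * lin_lam hQsmooth hPDE p
    have e2 : ∀ p, (dv (1, 0) (dv (1, 0) P) p + dv (0, 1) (dv (0, 1) P) p) * g p
        = (P p - 3 * Q p ^ 2 * P p) * g p - F p * g p := fun p => by
      rw [hF]; linear_combination (-g p) * hL p
    simp only [e1, e2] at hgreen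
    rw [integral_add hVi (hPQi.const_mul 2), integral_sub hVi hFgi,
      integral_const_mul] at hgreen
    linarith
  have hline : ∀ y, ∫ x, F (x, y) * g (x, y) = -(1 / 2) * (∫ x, g (x, y)) ^ 2 := fun y => by
    obtain ⟨_, hM⟩ := hFgd.line hFgc
    have hi := (hM y).1.neg
    have := integral_tail_mul (g := fun s => g (s, y))
      (hgs.continuous.comp (by fun_prop)) (hN y).1 (by simpa [hF, Pi.neg_def] using hi)
    simp only [hF, neg_mul, integral_neg]
    rw [this]; ring
  have hfub : ∫ p, F p * g p = -(1 / 2) * ∫ y, (∫ x, g (x, y)) ^ 2 := by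
    rw [Measure.volume_eq_prod, integral_prod_symm _ (by rwa [← Measure.volume_eq_prod])]
    simp only [hline]
    rw [integral_const_mul]
  have hmain : ∫ p, P p * Q p = (1 / 4) * ∫ y, (∫ x, g (x, y)) ^ 2 := by linarith
  refine ⟨hmain, ?_⟩
  have hm2i : Integrable fun y => (∫ x, g (x, y)) ^ 2 := by
    rw [Measure.volume_eq_prod] at hFgi
    have := hFgi.integral_prod_right.const_mul (-2)
    simp only [hline] at this
    refine this.congr (ae_of_all _ fun y => ?_)
    simp only; ring
  have h0 : 0 ≤ ∫ y, (∫ x, g (x, y)) ^ 2 := integral_nonneg fun y => sq_nonneg _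
  rw [hmain]
  refine mul_pos (by norm_num) (lt_of_le_of_ne h0 fun hz => ?_)
  -- If `∫ ΛQ dx₁` vanished for almost every `x₂`, then `-∫ Q = ∫ ΛQ = 0`.
  have hae := (integral_eq_zero_iff_of_nonneg (fun y => sq_nonneg _) hm2i).1 hz.symm
  have hg0 : ∫ p, g p = 0 := by
    have hgi := hgd.integrable hgs.continuous
    rw [Measure.volume_eq_prod] at hgi ⊢
    rw [integral_prod_symm _ hgi]
    refine integral_eq_zero_of_ae ?_
    filter_upwards [hae] with y hy
    simpa using hy
  have hQint : 0 < ∫ p, Q p := by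
    rw [integral_pos_iff_support_of_nonneg (fun p => (hQpos p).le) hQi]
    have : Function.support Q = Set.univ := Set.eq_univ_of_forall fun p => (hQpos p).ne'
    rw [this]
    simp
  rw [hg, integral_lam hQsmooth hfast] at hg0
  linarith
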